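/- arXiv:2308.10547 — 2 statements merged into one kernel-verified Lean document; each statement's English description precedes it below -/
import Mathlib

section
/- (One-step consensus recursion with drift.) Let γ ∈ (0,1), L_g > 0, and let W be symmetric, doubly stochastic with nonnegative entries and second largest singular value σ₂ ∈ [0,1), with √n·σ₂^t·ζ ≤ γ(1−γ)/4. Let x_{1,k},…,x_{n,k} ∈ St(d,r) satisfy ‖x̂_k − x̄_k‖ ≤ γ/2, let η_{i,k} ∈ T_{x_{i,k}} St(d,r) with ‖η_{i,k}‖ ≤ 2L_g for each i, let 0 < α_k ≤ γ(1−γ)/(8L_g), and let x_{i,k+1} be any nearest-point projection of ∑_j (W^t)_{ij} x_{j,k} + α_k η_{i,k} onto St(d,r). Then, with stacked norms ‖x_k − x̄_k‖² := ∑_i ‖x_{i,k} − x̄_k‖², one has ‖x_{k+1} − x̄_{k+1}‖ ≤ (σ₂^t/(1−γ))‖x_k − x̄_k‖ + (2/(1−γ))·√n·α_k·L_g. -/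
open scoped RealInnerProductSpace

attribute [local instance] Matrix.frobeniusNormedAddCommGroup Matrix.frobeniusNormedSpace

/-- The Stiefel manifold `St(d,r) = {x ∈ ℝ^{d×r} : xᵀx = I_r}`, viewed as a subset of the
`d × r` real matrices equipped with the Frobenius norm. -/
def Stiefel (d r : ℕ) : Set (Matrix (Fin d) (Fin r) ℝ) :=
  {x | x.transpose * x = 1}

/-- Orthogonal projection onto the tangent space of the Stiefel manifold at `x`:
`P_{T_x}(v) = v - (1/2)·x·(xᵀv + vᵀx)`. -/
noncomputable def Tproj {d r : ℕ} (x v : Matrix (Fin d) (Fin r) ℝ) :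
    Matrix (Fin d) (Fin r) ℝ :=
  v - (1 / 2 : ℝ) • (x * (x.transpose * v + v.transpose * x))

/-- `p` is a nearest-point projection of `z` onto the set `S` (w.r.t. the Frobenius norm). -/
def IsNearestPoint {d r : ℕ} (S : Set (Matrix (Fin d) (Fin r) ℝ))
    (z p : Matrix (Fin d) (Fin r) ℝ) : Prop :=
  p ∈ S ∧ ∀ q ∈ S, ‖z - p‖ ≤ ‖z - q‖

/-- The second largest singular value of a real symmetric matrix `W`: the singular values are
the absolute values of the eigenvalues, and the second largest element (with multiplicity) of
the family `i ↦ |λ_i|` is `sup_{i ≠ j} min |λ_i| |λ_j|`. -/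
noncomputable def sigma2 {n : ℕ} (W : Matrix (Fin n) (Fin n) ℝ) (hW : W.IsHermitian) : ℝ :=
  ⨆ p : {p : Fin n × Fin n // p.1 ≠ p.2}, min |hW.eigenvalues p.1.1| |hW.eigenvalues p.1.2|

/-! A nearest point `p ∈ St(d,r)` to `z` maximizes `⟪z, ·⟫`, so `Q = 1` maximizes `tr (Q p zᵀ)` over
the orthogonal group. The first-order condition along `t ↦ exp (t A)`, with `A` skew, makes `p zᵀ`
symmetric, hence `z - p = p s` with `s` symmetric and `‖s‖ = ‖z - p‖`. Together with
`pᵀp = qᵀq = 1` this gives `2 ⟪z - p, q - p⟫ = -⟪(q - p) s, q - p⟫ ≤ ‖z - p‖ ‖q - p‖²` for `q` in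
`St(d,r)`: the manifold has reach at least `1`, and the projection is `(1 - γ)⁻¹`-Lipschitz on
points at distance at most `γ` from it.

Multiplication by `Wᵗ` fixes the mean and contracts deviations from it by `σ₂ᵗ`. Hence every point
`∑ⱼ (Wᵗ)ᵢⱼ xⱼ + α ηᵢ`, as well as the mean `x̂`, lies within `γ` of `St(d,r)`. Comparing the
projections `xᵢ'` with the projection `x̄` of `x̂` bounds `‖x' - x̄‖` by `(1 - γ)⁻¹` times
`σ₂ᵗ ‖x - x̂‖ + 2 √n α L`. Finally `‖x - x̂‖ ≤ ‖x - x̄‖`, and `‖x' - x̄'‖ ≤ ‖x' - x̄‖` because the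
distance to the mean determines the stacked distance to a consensual family. -/

open Matrix

section StackedNorm

variable {ι E : Type*} [Fintype ι]

/-- The stacked norm `(∑ᵢ ‖aᵢ‖²)^(1/2)` of a finite family of vectors, in which consensus errors
are measured. It is the norm of `PiLp 2`, but defined on plain functions. -/
noncomputable def stackedNorm [SeminormedAddCommGroup E] (a : ι → E) : ℝ :=
  √(∑ i, ‖a i‖ ^ 2)

section Seminormed

variable [SeminormedAddCommGroup E] {a b : ι → E} {c : ℝ}

theorem stackedNorm_eq_norm_toLp (a : ι → E) : stackedNorm a = ‖WithLp.toLp 2 a‖ :=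
  (PiLp.norm_eq_of_L2 _).symm

theorem sq_stackedNorm (a : ι → E) : stackedNorm a ^ 2 = ∑ i, ‖a i‖ ^ 2 :=
  Real.sq_sqrt (by positivity)

theorem stackedNorm_nonneg (a : ι → E) : 0 ≤ stackedNorm a :=
  Real.sqrt_nonneg _

theorem norm_le_stackedNorm (a : ι → E) (i : ι) : ‖a i‖ ≤ stackedNorm a := by
  rw [stackedNorm_eq_norm_toLp]
  exact PiLp.norm_apply_le (WithLp.toLp 2 a) i

theorem stackedNorm_add_le (a b : ι → E) :
    stackedNorm (a + b) ≤ stackedNorm a + stackedNorm b := by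
  simp only [stackedNorm_eq_norm_toLp, WithLp.toLp_add]
  exact norm_add_le _ _

theorem stackedNorm_le_mul_stackedNorm (hc : 0 ≤ c) (h : ∀ i, ‖a i‖ ≤ c * ‖b i‖) :
    stackedNorm a ≤ c * stackedNorm b := by
  refine Real.sqrt_le_iff.2 ⟨mul_nonneg hc (stackedNorm_nonneg b), ?_⟩
  rw [mul_pow, sq_stackedNorm, Finset.mul_sum]
  gcongr with i
  rw [← mul_pow]
  gcongr
  exact h i

theorem stackedNorm_le_sqrt_card_mul (h : ∀ i, ‖a i‖ ≤ c) :
    stackedNorm a ≤ √(Fintype.card ι) * c := by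
  cases isEmpty_or_nonempty ι with
  | inl _ => simp [stackedNorm]
  | inr hι =>
    have hc : 0 ≤ c := (norm_nonneg _).trans (h hι.some)
    refine Real.sqrt_le_iff.2 ⟨by positivity, ?_⟩
    rw [mul_pow, Real.sq_sqrt (Nat.cast_nonneg _), ← nsmul_eq_mul]
    exact Finset.sum_le_card_nsmul _ _ _ fun i _ ↦ by gcongr; exact h i

end Seminormed

section Mean

theorem sum_sub_mean_eq_zero {n : ℕ} [AddCommGroup E] [Module ℝ E] (x : Fin n → E) :
    ∑ i, (x i - (n : ℝ)⁻¹ • ∑ j, x j) = 0 := by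
  rcases eq_or_ne n 0 with rfl | hn
  · exact Fin.sum_univ_zero _
  · rw [Finset.sum_sub_distrib, Finset.sum_const, Finset.card_univ, Fintype.card_fin,
      ← Nat.cast_smul_eq_nsmul ℝ, smul_inv_smul₀ (Nat.cast_ne_zero.2 hn), sub_self]

variable [NormedAddCommGroup E] [InnerProductSpace ℝ E] {x : ι → E} {m q q' : E}

theorem sq_stackedNorm_sub_eq (hm : ∑ i, (x i - m) = 0) (q : E) :
    stackedNorm (fun i ↦ x i - q) ^ 2 =
      stackedNorm (fun i ↦ x i - m) ^ 2 + Fintype.card ι * ‖m - q‖ ^ 2 := by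
  have expand (i : ι) :
      ‖x i - q‖ ^ 2 = ‖x i - m‖ ^ 2 + 2 * ⟪x i - m, m - q⟫ + ‖m - q‖ ^ 2 := by
    rw [← norm_add_sq_real, sub_add_sub_cancel]
  simp only [sq_stackedNorm, expand, Finset.sum_add_distrib, ← Finset.mul_sum, ← sum_inner, hm,
    inner_zero_left, mul_zero, add_zero, Finset.sum_const, Finset.card_univ, nsmul_eq_mul]

theorem stackedNorm_sub_le_of_norm_mean_sub_le (hm : ∑ i, (x i - m) = 0)
    (h : ‖m - q‖ ≤ ‖m - q'‖) :
    stackedNorm (fun i ↦ x i - q) ≤ stackedNorm fun i ↦ x i - q' := by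
  refine (pow_le_pow_iff_left₀ (stackedNorm_nonneg _) (stackedNorm_nonneg _) two_ne_zero).1 ?_
  rw [sq_stackedNorm_sub_eq hm q, sq_stackedNorm_sub_eq hm q']
  gcongr

end Mean

end StackedNorm

section Mixing

variable {n : ℕ} {W : Matrix (Fin n) (Fin n) ℝ} (hW : W.IsHermitian)

theorem min_abs_eigenvalues_le_sigma2 {i j : Fin n} (hij : i ≠ j) :
    min |hW.eigenvalues i| |hW.eigenvalues j| ≤ sigma2 W hW :=
  le_ciSup (f := fun p : {p : Fin n × Fin n // p.1 ≠ p.2} ↦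
    min |hW.eigenvalues p.1.1| |hW.eigenvalues p.1.2|)
    (Set.finite_range _).bddAbove ⟨(i, j), hij⟩

theorem sigma2_nonneg : 0 ≤ sigma2 W hW :=
  Real.iSup_nonneg fun _ ↦ le_min (abs_nonneg _) (abs_nonneg _)

theorem pow_mulVec_eq_smul {R ι : Type*} [CommSemiring R] [Fintype ι] [DecidableEq ι]
    {A : Matrix ι ι R} {v : ι → R} {μ : R} (h : A *ᵥ v = μ • v) (t : ℕ) :
    (A ^ t) *ᵥ v = μ ^ t • v := by
  induction t with
  | zero => simp only [pow_zero, one_mulVec, one_smul]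
  | succ t ih => rw [pow_succ, ← mulVec_mulVec, h, mulVec_smul, ih, smul_smul, pow_succ']

theorem eigenvectorBasis_vecMul_pow (k : Fin n) (t : ℕ) :
    ⇑(hW.eigenvectorBasis k) ᵥ* (W ^ t) =
      hW.eigenvalues k ^ t • ⇑(hW.eigenvectorBasis k) := by
  have hsymm : (W ^ t)ᵀ = W ^ t := (conjTranspose_eq_transpose_of_trivial _).symm.trans (hW.pow t)
  rw [← hsymm, vecMul_transpose, pow_mulVec_eq_smul (hW.mulVec_eigenvectorBasis k)]

theorem inner_eigenvectorBasis_one_eq_zero (hW1 : W *ᵥ 1 = 1) {k : Fin n}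
    (hk : hW.eigenvalues k ≠ 1) :
    ⟪hW.eigenvectorBasis k, WithLp.toLp 2 1⟫ = 0 := by
  set u : Fin n → ℝ := ⇑(hW.eigenvectorBasis k)
  have hu : hW.eigenvalues k * (u ⬝ᵥ 1) = u ⬝ᵥ 1 := by
    have huW := eigenvectorBasis_vecMul_pow hW k 1
    rw [pow_one, pow_one] at huW
    rw [← smul_eq_mul, ← smul_dotProduct, ← huW, ← dotProduct_mulVec, hW1]
  have h0 : u ⬝ᵥ 1 = 0 := by
    have : (hW.eigenvalues k - 1) * (u ⬝ᵥ 1) = 0 := by linarith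
    exact (mul_eq_zero.1 this).resolve_left (sub_ne_zero.2 hk)
  rw [EuclideanSpace.inner_eq_star_dotProduct, star_trivial, dotProduct_comm]
  exact h0

/- At most one eigenvalue can exceed `σ₂` in modulus. The others have modulus at most `σ₂ < 1`, so
the constant vector, being fixed by `W`, lies along the remaining eigenvector. -/
theorem eigenvectorBasis_const_of_sigma2_lt_abs_eigenvalue (hW1 : W *ᵥ 1 = 1)
    (hσ : sigma2 W hW < 1) {k : Fin n} (hk : sigma2 W hW < |hW.eigenvalues k|) :
    ∃ c, ∀ i, hW.eigenvectorBasis k i = c := by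
  set b := hW.eigenvectorBasis
  set e : EuclideanSpace ℝ (Fin n) := WithLp.toLp 2 1
  have horth : ∀ j ≠ k, ⟪b j, e⟫ = 0 := by
    refine fun j hj ↦ inner_eigenvectorBasis_one_eq_zero hW hW1 fun hj1 ↦ ?_
    have hmin := min_abs_eigenvalues_le_sigma2 hW hj
    rw [hj1, abs_one] at hmin
    exact hmin.not_gt (lt_min hσ hk)
  have he : ⟪b k, e⟫ • b k = e := by
    refine (Finset.sum_eq_single k (fun j _ hj ↦ ?_) fun hk ↦ ?_).symm.trans (b.sum_repr' e)
    · rw [horth j hj, zero_smul]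
    · exact absurd (Finset.mem_univ k) hk
  refine ⟨⟪b k, e⟫⁻¹, fun i ↦ eq_inv_of_mul_eq_one_right ?_⟩
  exact congrArg (fun v : EuclideanSpace ℝ (Fin n) ↦ v i) he

variable {E : Type*} [NormedAddCommGroup E] [InnerProductSpace ℝ E]

theorem sum_sq_norm_sum_smul {ι κ : Type*} [Fintype ι] [Fintype κ]
    (b : OrthonormalBasis κ ℝ (EuclideanSpace ℝ ι)) (y : ι → E) :
    ∑ k, ‖∑ j, b k j • y j‖ ^ 2 = ∑ j, ‖y j‖ ^ 2 := by
  classical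
  have hb (i j : ι) : ∑ k, b k i * b k j = if i = j then 1 else 0 := by
    have := b.sum_inner_mul_inner (EuclideanSpace.single i 1) (EuclideanSpace.single j 1)
    simpa [EuclideanSpace.inner_single_left, EuclideanSpace.inner_single_right, eq_comm] using this
  calc ∑ k, ‖∑ j, b k j • y j‖ ^ 2
      = ∑ k, ∑ i, ∑ j, (b k i * b k j) * ⟪y j, y i⟫ := by
        simp only [← real_inner_self_eq_norm_sq, sum_inner, inner_sum, real_inner_smul_left,
          real_inner_smul_right, mul_assoc]
    _ = ∑ i, ∑ j, (∑ k, b k i * b k j) * ⟪y j, y i⟫ := by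
        simp only [Finset.sum_mul]
        rw [Finset.sum_comm]
        exact Finset.sum_congr rfl fun i _ ↦ Finset.sum_comm
    _ = ∑ j, ‖y j‖ ^ 2 := by
        simp only [hb, ite_mul, one_mul, zero_mul, Finset.sum_ite_eq, Finset.mem_univ, if_true,
          real_inner_self_eq_norm_sq]

theorem norm_eigenvectorBasis_smul_pow_le (hW1 : W *ᵥ 1 = 1) (hσ : sigma2 W hW < 1)
    {y : Fin n → E} (hy : ∑ j, y j = 0) (t : ℕ) (k : Fin n) :
    ‖∑ i, hW.eigenvectorBasis k i • ∑ j, (W ^ t) i j • y j‖ ≤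
      sigma2 W hW ^ t * ‖∑ j, hW.eigenvectorBasis k j • y j‖ := by
  have hdiag : ∑ i, hW.eigenvectorBasis k i • ∑ j, (W ^ t) i j • y j =
      hW.eigenvalues k ^ t • ∑ j, hW.eigenvectorBasis k j • y j := by
    have hk (j : Fin n) := congrFun (eigenvectorBasis_vecMul_pow hW k t) j
    simp only [vecMul, dotProduct, Pi.smul_apply, smul_eq_mul] at hk
    simp only [Finset.smul_sum, smul_smul, ← hk, Finset.sum_smul]
    exact Finset.sum_comm
  rw [hdiag, norm_smul, norm_pow, Real.norm_eq_abs]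
  rcases le_or_gt |hW.eigenvalues k| (sigma2 W hW) with hk | hk
  · gcongr
  · obtain ⟨c, hc⟩ := eigenvectorBasis_const_of_sigma2_lt_abs_eigenvalue hW hW1 hσ hk
    simp only [hc, ← Finset.smul_sum, hy, smul_zero, norm_zero, mul_zero, le_refl]

theorem stackedNorm_sum_pow_smul_le (hW1 : W *ᵥ 1 = 1) (hσ : sigma2 W hW < 1)
    {y : Fin n → E} (hy : ∑ j, y j = 0) (t : ℕ) :
    stackedNorm (fun i ↦ ∑ j, (W ^ t) i j • y j) ≤ sigma2 W hW ^ t * stackedNorm y := by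
  have parseval (a : Fin n → E) :
      stackedNorm a = stackedNorm fun k ↦ ∑ j, hW.eigenvectorBasis k j • a j :=
    congrArg Real.sqrt (sum_sq_norm_sum_smul hW.eigenvectorBasis a).symm
  rw [parseval, parseval y]
  exact stackedNorm_le_mul_stackedNorm (pow_nonneg (sigma2_nonneg hW) t)
    (norm_eigenvectorBasis_smul_pow_le hW hW1 hσ hy t)

theorem stackedNorm_sum_pow_smul_sub_le (hW1 : W *ᵥ 1 = 1) (hσ : sigma2 W hW < 1)
    {x : Fin n → E} {m : E} (hm : ∑ i, (x i - m) = 0) (t : ℕ) :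
    stackedNorm (fun i ↦ ∑ j, (W ^ t) i j • x j - m) ≤
      sigma2 W hW ^ t * stackedNorm fun i ↦ x i - m := by
  have hrow (i : Fin n) : ∑ j, (W ^ t) i j = 1 := by
    have h1 : (W ^ t) *ᵥ 1 = (1 : ℝ) ^ t • (1 : Fin n → ℝ) :=
      pow_mulVec_eq_smul (hW1.trans (one_smul ℝ _).symm) t
    simpa [mulVec, dotProduct] using congrFun h1 i
  have hsub (i : Fin n) : ∑ j, (W ^ t) i j • x j - m = ∑ j, (W ^ t) i j • (x j - m) := by
    simp only [smul_sub, Finset.sum_sub_distrib, ← Finset.sum_smul, hrow, one_smul]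
  simp only [hsub]
  exact stackedNorm_sum_pow_smul_le hW hW1 hσ hm t

theorem stackedNorm_mixing_sub_mean_le (hrow : ∀ i, ∑ j, W i j = 1) (hσ : sigma2 W hW < 1)
    (x : Fin n → E) (q : E) (t : ℕ) :
    stackedNorm (fun i ↦ ∑ j, (W ^ t) i j • x j - (n : ℝ)⁻¹ • ∑ j, x j) ≤
      sigma2 W hW ^ t * stackedNorm fun i ↦ x i - q := by
  have hW1 : W *ᵥ 1 = 1 := by
    ext i
    simpa only [mulVec, dotProduct_one, Pi.one_apply] using hrow i
  have hm := sum_sub_mean_eq_zero x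
  refine (stackedNorm_sum_pow_smul_sub_le hW hW1 hσ hm t).trans ?_
  refine mul_le_mul_of_nonneg_left ?_ (pow_nonneg (sigma2_nonneg hW) t)
  exact stackedNorm_sub_le_of_norm_mean_sub_le hm (by rw [sub_self, norm_zero]; positivity)

end Mixing

section ProxRegular

variable {E : Type*} [NormedAddCommGroup E]

/-- `p` is a metric projection of `z` onto the subset `S` of a normed group: `IsNearestPoint`
beyond spaces of matrices. -/
def IsMetricProjection (S : Set E) (z p : E) : Prop :=
  p ∈ S ∧ ∀ q ∈ S, ‖z - p‖ ≤ ‖z - q‖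

variable [InnerProductSpace ℝ E]

/-- `S` is prox-regular with constant `κ`, i.e. satisfies the proximal normal inequality of a set
of reach `1 / κ`; convex sets satisfy it with `κ = 0`. It makes the metric projection Lipschitz near
`S`. -/
def IsProxRegular (κ : ℝ) (S : Set E) : Prop :=
  ∀ ⦃z p q : E⦄, IsMetricProjection S z p → q ∈ S →
    2 * ⟪z - p, q - p⟫ ≤ κ * ‖z - p‖ * ‖q - p‖ ^ 2

namespace IsProxRegular

variable {κ γ : ℝ} {S : Set E}

theorem norm_sub_le (hS : IsProxRegular κ S) (hκ : 0 ≤ κ) (hκγ : κ * γ < 1) {z w p q : E}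
    (hp : IsMetricProjection S z p) (hq : IsMetricProjection S w q)
    (hz : ‖z - p‖ ≤ γ) (hw : ‖w - q‖ ≤ γ) :
    ‖p - q‖ ≤ (1 - κ * γ)⁻¹ * ‖z - w‖ := by
  have hzp : 2 * ⟪z - p, q - p⟫ ≤ κ * γ * ‖p - q‖ ^ 2 := by
    refine (hS hp hq.1).trans ?_
    rw [norm_sub_rev q p]
    gcongr
  have hwq : 2 * ⟪w - q, p - q⟫ ≤ κ * γ * ‖p - q‖ ^ 2 :=
    (hS hq hp.1).trans (by gcongr)
  have hmono : (1 - κ * γ) * ‖p - q‖ ^ 2 ≤ ‖z - w‖ * ‖p - q‖ :=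
    calc (1 - κ * γ) * ‖p - q‖ ^ 2
        ≤ ‖p - q‖ ^ 2 - ⟪z - p, q - p⟫ - ⟪w - q, p - q⟫ := by linarith
      _ = ⟪z - w, p - q⟫ := by
        rw [← real_inner_self_eq_norm_sq, ← neg_sub p q, inner_neg_right, sub_neg_eq_add,
          ← inner_add_left, ← inner_sub_left]
        congr 1
        abel
      _ ≤ ‖z - w‖ * ‖p - q‖ := real_inner_le_norm _ _
  rw [le_inv_mul_iff₀ (sub_pos.2 hκγ)]
  rcases (norm_nonneg (p - q)).eq_or_lt with h0 | hpos
  · rw [← h0, mul_zero]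
    exact norm_nonneg _
  · exact le_of_mul_le_mul_right (by linarith) hpos

theorem stackedNorm_sub_le {ι : Type*} [Fintype ι] (hS : IsProxRegular κ S) (hκ : 0 ≤ κ)
    (hκγ : κ * γ < 1) {z x' : ι → E} {m m' p p' : E} (hp : IsMetricProjection S m p)
    (hx' : ∀ i, IsMetricProjection S (z i) (x' i)) (hγ : ∀ i, ‖z i - m‖ + ‖m - p‖ ≤ γ)
    (hm' : ∑ i, (x' i - m') = 0) (hp' : IsMetricProjection S m' p') :
    stackedNorm (fun i ↦ x' i - p') ≤ (1 - κ * γ)⁻¹ * stackedNorm fun i ↦ z i - m := by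
  refine (stackedNorm_sub_le_of_norm_mean_sub_le hm' (hp'.2 p hp.1)).trans ?_
  refine stackedNorm_le_mul_stackedNorm (inv_nonneg.2 (sub_pos.2 hκγ).le) fun i ↦ ?_
  have hz : ‖z i - x' i‖ ≤ γ :=
    ((hx' i).2 p hp.1).trans ((norm_sub_le_norm_sub_add_norm_sub _ m _).trans (hγ i))
  have hmp : ‖m - p‖ ≤ γ := (le_add_of_nonneg_left (norm_nonneg _)).trans (hγ i)
  exact hS.norm_sub_le hκ hκγ (hx' i) hp hz hmp

end IsProxRegular

end ProxRegular

section Frobenius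

variable {m n : Type*} [Fintype m] [Fintype n]

theorem sq_frobenius_norm_eq_trace (a : Matrix m n ℝ) : ‖a‖ ^ 2 = trace (aᵀ * a) := by
  rw [frobenius_norm_def, ← Real.sqrt_eq_rpow, Real.sq_sqrt (by positivity), Finset.sum_comm]
  simp only [trace, diag, mul_apply, transpose_apply, Real.norm_eq_abs, Real.rpow_two, sq_abs, ← sq]

/-- The Frobenius inner product `⟨a, b⟩ = tr(aᵀ b)`, inducing the Frobenius norm. It is a local
instance only, as Mathlib fixes no norm on matrices. -/
noncomputable abbrev frobeniusInnerProductSpace : InnerProductSpace ℝ (Matrix m n ℝ) where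
  inner a b := trace (aᵀ * b)
  norm_sq_eq_re_inner := sq_frobenius_norm_eq_trace
  conj_inner_symm a b := by
    rw [conj_trivial, ← trace_transpose, transpose_mul, transpose_transpose]
  add_left a b c := by rw [transpose_add, Matrix.add_mul, trace_add]
  smul_left a b c := by
    rw [transpose_smul, Matrix.smul_mul, trace_smul, smul_eq_mul, conj_trivial]

end Frobenius

attribute [local instance] frobeniusInnerProductSpace

theorem frobenius_inner_eq_trace {m n : Type*} [Fintype m] [Fintype n] (a b : Matrix m n ℝ) :
    ⟪a, b⟫ = trace (aᵀ * b) :=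
  rfl

section Symmetry

variable {n : Type*} [Fintype n] [DecidableEq n]

attribute [local instance] frobeniusNormedRing frobeniusNormedAlgebra

theorem exp_mem_orthogonalGroup {A : Matrix n n ℝ} (hA : Aᵀ = -A) :
    NormedSpace.exp A ∈ orthogonalGroup n ℝ :=
  NormedSpace.exp_mem_unitary_of_mem_skewAdjoint
    (skewAdjoint.mem_iff.2 ((conjTranspose_eq_transpose_of_trivial A).trans hA))

theorem trace_mul_eq_zero_of_forall_orthogonal {A M : Matrix n n ℝ} (hA : Aᵀ = -A)
    (hM : ∀ Q ∈ orthogonalGroup n ℝ, trace (Q * M) ≤ trace M) : trace (A * M) = 0 := by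
  let L : Matrix n n ℝ →L[ℝ] ℝ :=
    LinearMap.toContinuousLinearMap (traceLinearMap n ℝ ℝ ∘ₗ LinearMap.mulRight ℝ M)
  have hderiv : HasDerivAt (fun t : ℝ ↦ L (NormedSpace.exp (t • A))) (L A) 0 := by
    have := L.hasFDerivAt.comp_hasDerivAt (0 : ℝ) (hasDerivAt_exp_smul_const (𝕂 := ℝ) A 0)
    rwa [zero_smul, NormedSpace.exp_zero, one_mul] at this
  have hmax : IsLocalMax (fun t : ℝ ↦ L (NormedSpace.exp (t • A))) 0 := by
    refine Filter.Eventually.of_forall fun t ↦ ?_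
    have hskew : (t • A)ᵀ = -(t • A) := by rw [transpose_smul, hA, smul_neg]
    simpa [L] using hM _ (exp_mem_orthogonalGroup hskew)
  exact hmax.hasDerivAt_eq_zero hderiv

theorem isSymm_of_forall_orthogonal_trace_mul_le {M : Matrix n n ℝ}
    (hM : ∀ Q ∈ orthogonalGroup n ℝ, trace (Q * M) ≤ trace M) : M.IsSymm := by
  have hskew : (Mᵀ - M)ᵀ = -(Mᵀ - M) := by
    rw [transpose_sub, transpose_transpose, neg_sub]
  have htr : trace ((Mᵀ - M) * M) = 0 := trace_mul_eq_zero_of_forall_orthogonal hskew hM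
  have htr' : trace ((Mᵀ - M) * Mᵀ) = 0 := by
    rw [← trace_transpose, transpose_mul, transpose_transpose, hskew, trace_mul_comm,
      Matrix.neg_mul, trace_neg, htr, neg_zero]
  have hnorm : ‖Mᵀ - M‖ ^ 2 = 0 := by
    rw [sq_frobenius_norm_eq_trace, hskew, Matrix.neg_mul, Matrix.mul_sub, trace_neg, trace_sub,
      htr, htr', sub_zero, neg_zero]
  exact sub_eq_zero.1 (norm_eq_zero.1 (pow_eq_zero_iff two_ne_zero |>.1 hnorm))

end Symmetry

namespace Stiefel

variable {d r : ℕ} {z p q : Matrix (Fin d) (Fin r) ℝ}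

theorem norm_mul (hp : p ∈ Stiefel d r) {k : Type*} [Fintype k] (s : Matrix (Fin r) k ℝ) :
    ‖p * s‖ = ‖s‖ := by
  have hsq : ‖p * s‖ ^ 2 = ‖s‖ ^ 2 := by
    rw [sq_frobenius_norm_eq_trace, sq_frobenius_norm_eq_trace, transpose_mul, Matrix.mul_assoc,
      ← Matrix.mul_assoc pᵀ, show pᵀ * p = 1 from hp, Matrix.one_mul]
  exact (pow_left_inj₀ (norm_nonneg _) (norm_nonneg _) two_ne_zero).1 hsq

theorem sq_norm_eq (hp : p ∈ Stiefel d r) : ‖p‖ ^ 2 = r := by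
  rw [sq_frobenius_norm_eq_trace, show pᵀ * p = 1 from hp, trace_one, Fintype.card_fin]

theorem isBounded (d r : ℕ) : Bornology.IsBounded (Stiefel d r) :=
  isBounded_iff_forall_norm_le.2 ⟨√r, fun _ hp ↦ Real.le_sqrt_of_sq_le (sq_norm_eq hp).le⟩

theorem orthogonal_mul_mem {Q : Matrix (Fin d) (Fin d) ℝ} (hQ : Q ∈ orthogonalGroup (Fin d) ℝ)
    (hp : p ∈ Stiefel d r) : Q * p ∈ Stiefel d r := by
  have hQ' : Qᵀ * Q = 1 := (mem_orthogonalGroup_iff' _ _).1 hQ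
  change (Q * p)ᵀ * (Q * p) = 1
  rw [transpose_mul, Matrix.mul_assoc, ← Matrix.mul_assoc Qᵀ, hQ', Matrix.one_mul]
  exact hp

theorem inner_le_of_isNearestPoint (h : IsNearestPoint (Stiefel d r) z p)
    (hq : q ∈ Stiefel d r) : ⟪z, q⟫ ≤ ⟪z, p⟫ := by
  have hsq : ‖z - p‖ ^ 2 ≤ ‖z - q‖ ^ 2 := by
    gcongr
    exact h.2 q hq
  rw [norm_sub_sq_real, norm_sub_sq_real, sq_norm_eq h.1, sq_norm_eq hq] at hsq
  linarith

theorem isSymm_mul_transpose_of_isNearestPoint (h : IsNearestPoint (Stiefel d r) z p) :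
    (p * zᵀ).IsSymm := by
  refine isSymm_of_forall_orthogonal_trace_mul_le fun Q hQ ↦ ?_
  rw [← Matrix.mul_assoc, trace_mul_comm (Q * p), trace_mul_comm p]
  exact inner_le_of_isNearestPoint h (orthogonal_mul_mem hQ h.1)

theorem exists_isSymm_sub_eq_mul (h : IsNearestPoint (Stiefel d r) z p) :
    ∃ s : Matrix (Fin r) (Fin r) ℝ, s.IsSymm ∧ z - p = p * s := by
  have hp : pᵀ * p = 1 := h.1
  have hzp : z * pᵀ = p * zᵀ := by
    simpa [IsSymm] using isSymm_mul_transpose_of_isNearestPoint h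
  have hz : z = p * (zᵀ * p) := by
    rw [← Matrix.mul_assoc, ← hzp, Matrix.mul_assoc, hp, Matrix.mul_one]
  have hsymm : (zᵀ * p).IsSymm := by
    have h1 : zᵀ * p = pᵀ * (z * pᵀ) * p := by
      rw [hzp, ← Matrix.mul_assoc, hp, Matrix.one_mul]
    have h2 : pᵀ * z = pᵀ * (z * pᵀ) * p := by
      rw [Matrix.mul_assoc, Matrix.mul_assoc, hp, Matrix.mul_one]
    rw [IsSymm, transpose_mul, transpose_transpose, h1, h2]
  refine ⟨zᵀ * p - 1, hsymm.sub isSymm_one, ?_⟩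
  rw [Matrix.mul_sub, Matrix.mul_one, ← hz]

theorem two_mul_inner_mul_sub_eq (hp : p ∈ Stiefel d r) (hq : q ∈ Stiefel d r)
    {s : Matrix (Fin r) (Fin r) ℝ} (hs : s.IsSymm) :
    2 * ⟪p * s, q - p⟫ = -⟪(q - p) * s, q - p⟫ := by
  have hp' : pᵀ * p = 1 := hp
  have hq' : qᵀ * q = 1 := hq
  have hcross : trace (s * (qᵀ * p)) = trace (s * (pᵀ * q)) := by
    rw [← trace_transpose, transpose_mul, transpose_mul, transpose_transpose, hs, trace_mul_comm]
  simp only [frobenius_inner_eq_trace, transpose_mul, hs.eq, transpose_sub, Matrix.mul_sub,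
    Matrix.sub_mul, Matrix.mul_assoc, trace_sub, hp', hq', hcross]
  ring

theorem isProxRegular (d r : ℕ) : IsProxRegular 1 (Stiefel d r) := by
  intro z p q h hq
  obtain ⟨s, hs, hzp⟩ := exists_isSymm_sub_eq_mul h
  calc 2 * ⟪z - p, q - p⟫
      = -⟪(q - p) * s, q - p⟫ := by rw [hzp, two_mul_inner_mul_sub_eq h.1 hq hs]
    _ ≤ ‖(q - p) * s‖ * ‖q - p‖ := (neg_le_abs _).trans (abs_real_inner_le_norm _ _)
    _ ≤ ‖q - p‖ * ‖s‖ * ‖q - p‖ := by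
      gcongr
      exact frobenius_norm_mul _ _
    _ = 1 * ‖z - p‖ * ‖q - p‖ ^ 2 := by
      rw [hzp, norm_mul h.1]
      ring

end Stiefel

theorem stmt11_general {E : Type*} [NormedAddCommGroup E] [InnerProductSpace ℝ E] {S : Set E}
    {κ : ℝ} (hS : IsProxRegular κ S) (hκ : 0 ≤ κ) (hbdd : Bornology.IsBounded S) {n : ℕ}
    (γ L : ℝ) (hκγ : κ * γ < 1) (W : Matrix (Fin n) (Fin n) ℝ) (hW : W.IsHermitian)
    (hrow : ∀ i, ∑ j, W i j = 1) (hσ : sigma2 W hW < 1) (t : ℕ)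
    (x : Fin n → E) (hx : ∀ i, x i ∈ S)
    (xbar : E) (hxbar : IsMetricProjection S ((n : ℝ)⁻¹ • ∑ i, x i) xbar)
    (η : Fin n → E) (hη : ∀ i, ‖η i‖ ≤ 2 * L) (α : ℝ) (hα : 0 ≤ α)
    (hγ : √n * sigma2 W hW ^ t * Metric.diam S + 2 * α * L
      + ‖(n : ℝ)⁻¹ • ∑ i, x i - xbar‖ ≤ γ)
    (x' : Fin n → E)
    (hx' : ∀ i, IsMetricProjection S (∑ j, (W ^ t) i j • x j + α • η i) (x' i))
    (xbar' : E) (hxbar' : IsMetricProjection S ((n : ℝ)⁻¹ • ∑ i, x' i) xbar') :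
    stackedNorm (fun i ↦ x' i - xbar') ≤
      sigma2 W hW ^ t / (1 - κ * γ) * stackedNorm (fun i ↦ x i - xbar) +
        2 / (1 - κ * γ) * √n * α * L := by
  set m : E := (n : ℝ)⁻¹ • ∑ i, x i
  set e : Fin n → E := fun i ↦ ∑ j, (W ^ t) i j • x j - m
  have hσ0 : 0 ≤ sigma2 W hW ^ t := pow_nonneg (sigma2_nonneg hW) t
  have hmix : stackedNorm e ≤ sigma2 W hW ^ t * stackedNorm fun i ↦ x i - xbar :=
    stackedNorm_mixing_sub_mean_le hW hrow hσ x xbar t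
  have hdiam : stackedNorm (fun i ↦ x i - xbar) ≤ √n * Metric.diam S := by
    simpa only [Fintype.card_fin] using stackedNorm_le_sqrt_card_mul fun i ↦
      (dist_eq_norm (x i) xbar).ge.trans (Metric.dist_le_diam_of_mem hbdd (hx i) hxbar.1)
  have hdrift (i : Fin n) : ‖α • η i‖ ≤ 2 * α * L := by
    rw [norm_smul, Real.norm_of_nonneg hα]
    linarith [mul_le_mul_of_nonneg_left (hη i) hα]
  have hsplit (i : Fin n) : ∑ j, (W ^ t) i j • x j + α • η i - m = e i + α • η i :=
    add_sub_right_comm _ _ _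
  have htube (i : Fin n) : ‖∑ j, (W ^ t) i j • x j + α • η i - m‖ + ‖m - xbar‖ ≤ γ := by
    have he : ‖e i‖ ≤ √n * sigma2 W hW ^ t * Metric.diam S := by
      linarith [norm_le_stackedNorm e i, mul_le_mul_of_nonneg_left hdiam hσ0]
    rw [hsplit]
    linarith [norm_add_le (e i) (α • η i), hdrift i]
  calc stackedNorm (fun i ↦ x' i - xbar')
      ≤ (1 - κ * γ)⁻¹ * stackedNorm (fun i ↦ e i + α • η i) := by
        simpa only [hsplit] using
          hS.stackedNorm_sub_le hκ hκγ hxbar hx' htube (sum_sub_mean_eq_zero x') hxbar'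
    _ ≤ (1 - κ * γ)⁻¹ * (sigma2 W hW ^ t * stackedNorm (fun i ↦ x i - xbar)
          + √n * (2 * α * L)) := by
        have := inv_nonneg.2 (sub_pos.2 hκγ).le
        gcongr
        refine (stackedNorm_add_le e fun i ↦ α • η i).trans (add_le_add hmix ?_)
        simpa only [Fintype.card_fin] using stackedNorm_le_sqrt_card_mul hdrift
    _ = _ := by ring

/-- One-step consensus recursion with drift. -/
theorem stmt11 {d r n : ℕ} (γ Lg : ℝ) (hγ : γ ∈ Set.Ioo (0 : ℝ) 1) (hLg : 0 < Lg)
    (W : Matrix (Fin n) (Fin n) ℝ) (hW : W.IsHermitian)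
    (hnn : ∀ i j, 0 ≤ W i j)
    (hrow : ∀ i, ∑ j, W i j = 1) (hcol : ∀ j, ∑ i, W i j = 1)
    (hσ : sigma2 W hW ∈ Set.Ico (0 : ℝ) 1)
    (t : ℕ) (ht : 0 < t)
    (hmix : Real.sqrt n * sigma2 W hW ^ t * Metric.diam (Stiefel d r) ≤ γ * (1 - γ) / 4)
    (x : Fin n → Matrix (Fin d) (Fin r) ℝ) (hx : ∀ i, x i ∈ Stiefel d r)
    (xbar : Matrix (Fin d) (Fin r) ℝ)
    (hxbar : IsNearestPoint (Stiefel d r) ((n : ℝ)⁻¹ • ∑ i, x i) xbar)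
    (hcons : ‖(n : ℝ)⁻¹ • ∑ i, x i - xbar‖ ≤ γ / 2)
    (η : Fin n → Matrix (Fin d) (Fin r) ℝ)
    (hηtan : ∀ i, (x i).transpose * η i + (η i).transpose * x i = 0)
    (hηbd : ∀ i, ‖η i‖ ≤ 2 * Lg)
    (α : ℝ) (hα0 : 0 < α) (hα : α ≤ γ * (1 - γ) / (8 * Lg))
    (x' : Fin n → Matrix (Fin d) (Fin r) ℝ)
    (hx' : ∀ i, IsNearestPoint (Stiefel d r)
      (∑ j, (W ^ t) i j • x j + α • η i) (x' i)) :
    ∀ xbar', IsNearestPoint (Stiefel d r) ((n : ℝ)⁻¹ • ∑ i, x' i) xbar' →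
      Real.sqrt (∑ i, ‖x' i - xbar'‖ ^ 2) ≤
        sigma2 W hW ^ t / (1 - γ) * Real.sqrt (∑ i, ‖x i - xbar‖ ^ 2) +
          2 / (1 - γ) * Real.sqrt n * α * Lg := by
  intro xbar' hxbar'
  have hsmall : √n * sigma2 W hW ^ t * Metric.diam (Stiefel d r) + 2 * α * Lg
      + ‖(n : ℝ)⁻¹ • ∑ i, x i - xbar‖ ≤ γ := by
    have hαLg := (le_div_iff₀ (by positivity)).1 hα
    linarith [mul_nonneg hγ.1.le hγ.1.le]
  simpa only [one_mul, stackedNorm] using stmt11_general (Stiefel.isProxRegular d r) zero_le_one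
    (Stiefel.isBounded d r) γ Lg (by simpa only [one_mul] using hγ.2) W hW hrow hσ.2 t x hx xbar
    hxbar η hηbd α hα0.le hsmall x' hx' xbar' hxbar'
end

section
/- Let f_1,…,f_n : ℝ^{d×r} → ℝ be differentiable, each with L-Lipschitz Euclidean gradient and ‖∇f_i(x)‖ ≤ L_f for all x ∈ St(d,r); set L_g := L + 2L_f and f := (1/n)∑_i f_i. Then for any x_1,…,x_n ∈ St(d,r) and any x̄ ∈ St(d,r): ‖grad f(x̄)‖² ≤ 2·‖(1/n)∑_{i=1}^n grad f_i(x_i)‖² + (2L_g²/n)·∑_{i=1}^n ‖x̄ − x_i‖². -/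
open scoped RealInnerProductSpace

attribute [local instance] Matrix.frobeniusNormedAddCommGroup Matrix.frobeniusNormedSpace

/-!
For `x` on the Stiefel manifold, `t = Tproj x v` is tangent, in that `xᵀ t` is skew-symmetric, hence
orthogonal to the removed part `(1/2) x (xᵀ v + vᵀ x)`, which is `x` times a symmetric matrix; so
`Tproj x` is nonexpansive. Moreover
`Tproj x g - Tproj y g = -(1/2) ((x - y) (xᵀ g + gᵀ x) + y ((x - y)ᵀ g + gᵀ (x - y)))` is bounded by
`2 ‖g‖ ‖x - y‖`. So a bounded Lipschitz field of matrices projects to a Lipschitz field of tangent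
vectors, with constant `L + 2 Lf`. As `Tproj xbar` is linear, it commutes with averaging over `i`,
and what remains is `‖a + b‖² ≤ 2 ‖a‖² + 2 ‖b‖²` and the convexity of the squared norm.
-/

section Mean

variable {ι E : Type*} [Fintype ι] [SeminormedAddCommGroup E] [NormedSpace ℝ E]

lemma norm_inv_card_smul_sum_sq_le (v : ι → E) :
    ‖(Fintype.card ι : ℝ)⁻¹ • ∑ i, v i‖ ^ 2 ≤ (∑ i, ‖v i‖ ^ 2) / Fintype.card ι :=
  calc ‖(Fintype.card ι : ℝ)⁻¹ • ∑ i, v i‖ ^ 2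
      = (‖∑ i, v i‖ / Fintype.card ι) ^ 2 := by
        rw [norm_smul, norm_inv, Real.norm_natCast, inv_mul_eq_div]
    _ ≤ ((∑ i, ‖v i‖) / Fintype.card ι) ^ 2 := by
        gcongr
        exact norm_sum_le _ _
    _ ≤ (∑ i, ‖v i‖ ^ 2) / Fintype.card ι := sum_div_card_sq_le_sum_sq_div_card

lemma norm_inv_card_smul_sum_sq_le_two_mul_add (a b : ι → E) :
    ‖(Fintype.card ι : ℝ)⁻¹ • ∑ i, a i‖ ^ 2 ≤
      2 * (‖(Fintype.card ι : ℝ)⁻¹ • ∑ i, b i‖ ^ 2 +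
        (∑ i, ‖a i - b i‖ ^ 2) / Fintype.card ι) := by
  set c := (Fintype.card ι : ℝ)⁻¹
  have hsplit : c • ∑ i, a i = c • ∑ i, b i + c • ∑ i, (a i - b i) := by
    rw [← smul_add, Finset.sum_sub_distrib, add_sub_cancel]
  calc ‖c • ∑ i, a i‖ ^ 2
      ≤ (‖c • ∑ i, b i‖ + ‖c • ∑ i, (a i - b i)‖) ^ 2 := by
        rw [hsplit]
        gcongr
        exact norm_add_le _ _
    _ ≤ 2 * (‖c • ∑ i, b i‖ ^ 2 + ‖c • ∑ i, (a i - b i)‖ ^ 2) := add_sq_le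
    _ ≤ 2 * (‖c • ∑ i, b i‖ ^ 2 + (∑ i, ‖a i - b i‖ ^ 2) / Fintype.card ι) := by
        gcongr
        exact norm_inv_card_smul_sum_sq_le _

end Mean

section Frobenius

open scoped Matrix

variable {l m n : Type*} [Fintype l] [Fintype m] [Fintype n]

lemma frobenius_norm_sq_eq_trace (A : Matrix m n ℝ) : ‖A‖ ^ 2 = (Aᵀ * A).trace := by
  rw [Matrix.frobenius_norm_def, ← Real.sqrt_eq_rpow, Real.sq_sqrt (by positivity),
    Finset.sum_comm]
  simp only [Matrix.trace, Matrix.diag_apply, Matrix.mul_apply, Matrix.transpose_apply,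
    Real.rpow_two, Real.norm_eq_abs, sq, abs_mul_abs_self]

lemma frobenius_norm_add_sq_of_trace_eq_zero {A B : Matrix m n ℝ} (h : (Aᵀ * B).trace = 0) :
    ‖A + B‖ ^ 2 = ‖A‖ ^ 2 + ‖B‖ ^ 2 := by
  have h' : (Bᵀ * A).trace = 0 := by
    rw [← Matrix.trace_transpose, Matrix.transpose_mul, Matrix.transpose_transpose, h]
  simp only [frobenius_norm_sq_eq_trace, Matrix.transpose_add, Matrix.add_mul, Matrix.mul_add,
    Matrix.trace_add, h, h', add_zero, zero_add]

lemma frobenius_norm_le_norm_add_of_trace_eq_zero {A B : Matrix m n ℝ}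
    (h : (Aᵀ * B).trace = 0) : ‖A‖ ≤ ‖A + B‖ := by
  refine (sq_le_sq₀ (norm_nonneg _) (norm_nonneg _)).1 ?_
  rw [frobenius_norm_add_sq_of_trace_eq_zero h]
  exact le_add_of_nonneg_right (sq_nonneg _)

lemma frobenius_norm_transpose_mul_add_le (A B : Matrix m n ℝ) :
    ‖Aᵀ * B + Bᵀ * A‖ ≤ 2 * ‖Aᵀ * B‖ := by
  have h : ‖Bᵀ * A‖ = ‖Aᵀ * B‖ := by
    rw [← Matrix.frobenius_norm_transpose, Matrix.transpose_mul, Matrix.transpose_transpose]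
  calc ‖Aᵀ * B + Bᵀ * A‖ ≤ ‖Aᵀ * B‖ + ‖Bᵀ * A‖ := norm_add_le _ _
    _ = 2 * ‖Aᵀ * B‖ := by rw [h, two_mul]

variable [DecidableEq n] {x : Matrix m n ℝ}

lemma frobenius_norm_mul_of_transpose_mul_self_eq_one (hx : xᵀ * x = 1) (B : Matrix n l ℝ) :
    ‖x * B‖ = ‖B‖ := by
  refine (sq_eq_sq₀ (norm_nonneg _) (norm_nonneg _)).1 ?_
  rw [frobenius_norm_sq_eq_trace, frobenius_norm_sq_eq_trace, Matrix.transpose_mul,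
    Matrix.mul_assoc, ← Matrix.mul_assoc xᵀ, hx, Matrix.one_mul]

lemma frobenius_norm_transpose_mul_le_of_transpose_mul_self_eq_one (hx : xᵀ * x = 1)
    (g : Matrix m l ℝ) : ‖xᵀ * g‖ ≤ ‖g‖ := by
  have horth : ((x * (xᵀ * g))ᵀ * (g - x * (xᵀ * g))).trace = 0 := by
    have hres : xᵀ * (g - x * (xᵀ * g)) = 0 := by
      rw [Matrix.mul_sub, ← Matrix.mul_assoc xᵀ x, hx, Matrix.one_mul, sub_self]
    rw [Matrix.transpose_mul, Matrix.mul_assoc, hres, Matrix.mul_zero, Matrix.trace_zero]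
  calc ‖xᵀ * g‖ = ‖x * (xᵀ * g)‖ := (frobenius_norm_mul_of_transpose_mul_self_eq_one hx _).symm
    _ ≤ ‖x * (xᵀ * g) + (g - x * (xᵀ * g))‖ :=
        frobenius_norm_le_norm_add_of_trace_eq_zero horth
    _ = ‖g‖ := by rw [add_sub_cancel]

end Frobenius

section TangentProjection

open scoped Matrix

lemma trace_transpose_mul_mul_eq_zero_of_isSymm {m n R : Type*} [Fintype m] [Fintype n] [CommRing R]
    [IsAddTorsionFree R] {x t : Matrix m n R} {A : Matrix n n R} (ht : xᵀ * t + tᵀ * x = 0)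
    (hA : A.IsSymm) : (tᵀ * (x * A)).trace = 0 := by
  refine self_eq_neg.1 ?_
  calc (tᵀ * (x * A)).trace = (A * (xᵀ * t)).trace := by
        rw [← Matrix.trace_transpose]
        simp only [Matrix.transpose_mul, Matrix.transpose_transpose, hA.eq, Matrix.mul_assoc]
    _ = -(A * (tᵀ * x)).trace := by
        rw [eq_neg_of_add_eq_zero_left ht, Matrix.mul_neg, Matrix.trace_neg]
    _ = -(tᵀ * (x * A)).trace := by rw [Matrix.trace_mul_comm, Matrix.mul_assoc]

variable {d r : ℕ} {x y : Matrix (Fin d) (Fin r) ℝ}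

/-- The tangent-space projection `Tproj x` bundled as a linear map, so that its compatibility with
averages and differences comes from the `map_*` lemmas. -/
noncomputable def tprojLinearMap (x : Matrix (Fin d) (Fin r) ℝ) :
    Matrix (Fin d) (Fin r) ℝ →ₗ[ℝ] Matrix (Fin d) (Fin r) ℝ where
  toFun := Tproj x
  map_add' v w := by
    simp only [Tproj, Matrix.transpose_add, Matrix.add_mul, Matrix.mul_add]
    module
  map_smul' c v := by
    simp only [Tproj, Matrix.transpose_smul, Matrix.smul_mul, Matrix.mul_smul, Matrix.mul_add,
      RingHom.id_apply]
    module

lemma tproj_sub (x v w : Matrix (Fin d) (Fin r) ℝ) :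
    Tproj x (v - w) = Tproj x v - Tproj x w :=
  map_sub (tprojLinearMap x) v w

lemma tproj_smul_sum {ι : Type*} (s : Finset ι) (x : Matrix (Fin d) (Fin r) ℝ) (c : ℝ)
    (v : ι → Matrix (Fin d) (Fin r) ℝ) :
    Tproj x (c • ∑ i ∈ s, v i) = c • ∑ i ∈ s, Tproj x (v i) :=
  ((tprojLinearMap x).map_smul c _).trans (congrArg (c • ·) (map_sum (tprojLinearMap x) v s))

lemma transpose_mul_tproj_add_eq_zero (hx : x ∈ Stiefel d r) (v : Matrix (Fin d) (Fin r) ℝ) :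
    xᵀ * Tproj x v + (Tproj x v)ᵀ * x = 0 := by
  have hx' : xᵀ * x = 1 := hx
  have hxT : xᵀ * Tproj x v = (1 / 2 : ℝ) • (xᵀ * v - vᵀ * x) := by
    rw [Tproj, Matrix.mul_sub, Matrix.mul_smul, ← Matrix.mul_assoc, hx', Matrix.one_mul]
    module
  have hTx : (Tproj x v)ᵀ * x = (xᵀ * Tproj x v)ᵀ := by
    rw [Matrix.transpose_mul, Matrix.transpose_transpose]
  rw [hTx, hxT]
  simp only [Matrix.transpose_smul, Matrix.transpose_sub, Matrix.transpose_mul,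
    Matrix.transpose_transpose]
  module

lemma norm_tproj_le (hx : x ∈ Stiefel d r) (v : Matrix (Fin d) (Fin r) ℝ) :
    ‖Tproj x v‖ ≤ ‖v‖ := by
  have hsymm : (xᵀ * v + vᵀ * x).IsSymm := by
    simpa only [Matrix.transpose_mul, Matrix.transpose_transpose] using
      Matrix.isSymm_add_transpose_self (xᵀ * v)
  have horth : ((Tproj x v)ᵀ * ((1 / 2 : ℝ) • (x * (xᵀ * v + vᵀ * x)))).trace = 0 := by
    rw [Matrix.mul_smul, Matrix.trace_smul,
      trace_transpose_mul_mul_eq_zero_of_isSymm (transpose_mul_tproj_add_eq_zero hx v) hsymm,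
      smul_zero]
  simpa only [Tproj, sub_add_cancel] using frobenius_norm_le_norm_add_of_trace_eq_zero horth

lemma tproj_sub_tproj (x y g : Matrix (Fin d) (Fin r) ℝ) :
    Tproj x g - Tproj y g = (-(1 / 2) : ℝ) •
      ((x - y) * (xᵀ * g + gᵀ * x) + y * ((x - y)ᵀ * g + gᵀ * (x - y))) := by
  simp only [Tproj, Matrix.transpose_sub, Matrix.sub_mul, Matrix.mul_sub, Matrix.mul_add]
  module

lemma norm_tproj_sub_tproj_le_mul (hx : x ∈ Stiefel d r) (hy : y ∈ Stiefel d r)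
    (g : Matrix (Fin d) (Fin r) ℝ) : ‖Tproj x g - Tproj y g‖ ≤ 2 * ‖g‖ * ‖x - y‖ := by
  have hfst : ‖(x - y) * (xᵀ * g + gᵀ * x)‖ ≤ ‖x - y‖ * (2 * ‖g‖) :=
    calc ‖(x - y) * (xᵀ * g + gᵀ * x)‖ ≤ ‖x - y‖ * ‖xᵀ * g + gᵀ * x‖ :=
          Matrix.frobenius_norm_mul _ _
      _ ≤ ‖x - y‖ * (2 * ‖xᵀ * g‖) := by
          gcongr
          exact frobenius_norm_transpose_mul_add_le x g
      _ ≤ ‖x - y‖ * (2 * ‖g‖) := by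
          gcongr
          exact frobenius_norm_transpose_mul_le_of_transpose_mul_self_eq_one hx g
  have hsnd : ‖y * ((x - y)ᵀ * g + gᵀ * (x - y))‖ ≤ 2 * (‖x - y‖ * ‖g‖) :=
    calc ‖y * ((x - y)ᵀ * g + gᵀ * (x - y))‖ = ‖(x - y)ᵀ * g + gᵀ * (x - y)‖ :=
          frobenius_norm_mul_of_transpose_mul_self_eq_one hy _
      _ ≤ 2 * ‖(x - y)ᵀ * g‖ := frobenius_norm_transpose_mul_add_le _ _
      _ ≤ 2 * (‖x - y‖ * ‖g‖) := by
          rw [← Matrix.frobenius_norm_transpose (x - y)]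
          gcongr
          exact Matrix.frobenius_norm_mul _ _
  calc ‖Tproj x g - Tproj y g‖
      = 1 / 2 * ‖(x - y) * (xᵀ * g + gᵀ * x) + y * ((x - y)ᵀ * g + gᵀ * (x - y))‖ := by
        rw [tproj_sub_tproj, norm_smul, norm_neg, Real.norm_of_nonneg one_half_pos.le]
    _ ≤ 1 / 2 * (‖x - y‖ * (2 * ‖g‖) + 2 * (‖x - y‖ * ‖g‖)) := by
        gcongr
        exact norm_add_le_of_le hfst hsnd
    _ = 2 * ‖g‖ * ‖x - y‖ := by ring

lemma norm_tproj_sub_tproj_le (hx : x ∈ Stiefel d r) (hy : y ∈ Stiefel d r)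
    (u v : Matrix (Fin d) (Fin r) ℝ) :
    ‖Tproj x u - Tproj y v‖ ≤ ‖u - v‖ + 2 * ‖v‖ * ‖x - y‖ :=
  calc ‖Tproj x u - Tproj y v‖ = ‖Tproj x (u - v) + (Tproj x v - Tproj y v)‖ := by
        rw [tproj_sub, sub_add_sub_cancel]
    _ ≤ ‖u - v‖ + 2 * ‖v‖ * ‖x - y‖ :=
        norm_add_le_of_le (norm_tproj_le hx _) (norm_tproj_sub_tproj_le_mul hx hy v)

lemma norm_tproj_field_sub_le {L Lf : ℝ} {g : Matrix (Fin d) (Fin r) ℝ → Matrix (Fin d) (Fin r) ℝ}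
    (hLip : ∀ x ∈ Stiefel d r, ∀ y ∈ Stiefel d r, ‖g x - g y‖ ≤ L * ‖x - y‖)
    (hbd : ∀ x ∈ Stiefel d r, ‖g x‖ ≤ Lf) (hx : x ∈ Stiefel d r) (hy : y ∈ Stiefel d r) :
    ‖Tproj x (g x) - Tproj y (g y)‖ ≤ (L + 2 * Lf) * ‖x - y‖ :=
  calc ‖Tproj x (g x) - Tproj y (g y)‖ ≤ ‖g x - g y‖ + 2 * ‖g y‖ * ‖x - y‖ :=
        norm_tproj_sub_tproj_le hx hy _ _
    _ ≤ L * ‖x - y‖ + 2 * Lf * ‖x - y‖ := by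
        gcongr
        exacts [hLip x hx y hy, hbd y hy]
    _ = (L + 2 * Lf) * ‖x - y‖ := by ring

end TangentProjection

theorem stmt13_general {ι : Type*} [Fintype ι] {d r : ℕ} {L Lf : ℝ}
    {g : ι → Matrix (Fin d) (Fin r) ℝ → Matrix (Fin d) (Fin r) ℝ}
    (hLip : ∀ i, ∀ x ∈ Stiefel d r, ∀ y ∈ Stiefel d r, ‖g i x - g i y‖ ≤ L * ‖x - y‖)
    (hbd : ∀ i, ∀ x ∈ Stiefel d r, ‖g i x‖ ≤ Lf)
    {x : ι → Matrix (Fin d) (Fin r) ℝ} (hx : ∀ i, x i ∈ Stiefel d r)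
    {xbar : Matrix (Fin d) (Fin r) ℝ} (hxbar : xbar ∈ Stiefel d r) :
    ‖Tproj xbar ((Fintype.card ι : ℝ)⁻¹ • ∑ i, g i xbar)‖ ^ 2 ≤
      2 * ‖(Fintype.card ι : ℝ)⁻¹ • ∑ i, Tproj (x i) (g i (x i))‖ ^ 2 +
        2 * (L + 2 * Lf) ^ 2 / Fintype.card ι * ∑ i, ‖xbar - x i‖ ^ 2 := by
  set c := (Fintype.card ι : ℝ)
  set G := c⁻¹ • ∑ i, Tproj (x i) (g i (x i))
  have hdist : ∀ i, ‖Tproj xbar (g i xbar) - Tproj (x i) (g i (x i))‖ ^ 2 ≤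
      (L + 2 * Lf) ^ 2 * ‖xbar - x i‖ ^ 2 := fun i => by
    rw [← mul_pow]
    gcongr
    exact norm_tproj_field_sub_le (hLip i) (hbd i) hxbar (hx i)
  calc ‖Tproj xbar (c⁻¹ • ∑ i, g i xbar)‖ ^ 2
      = ‖c⁻¹ • ∑ i, Tproj xbar (g i xbar)‖ ^ 2 := by rw [tproj_smul_sum]
    _ ≤ 2 * (‖G‖ ^ 2 + (∑ i, ‖Tproj xbar (g i xbar) - Tproj (x i) (g i (x i))‖ ^ 2) / c) :=
        norm_inv_card_smul_sum_sq_le_two_mul_add _ _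
    _ ≤ 2 * (‖G‖ ^ 2 + (∑ i, (L + 2 * Lf) ^ 2 * ‖xbar - x i‖ ^ 2) / c) := by
        gcongr with i
        exact hdist i
    _ = 2 * ‖G‖ ^ 2 + 2 * (L + 2 * Lf) ^ 2 / c * ∑ i, ‖xbar - x i‖ ^ 2 := by
        rw [← Finset.mul_sum]
        ring

/-- bound on the Riemannian gradient of the global function at `x̄` via the
average of local Riemannian gradients plus the consensus error. Here `f = (1/n)∑ᵢ fᵢ`, so that
`∇f(x̄) = (1/n)∑ᵢ ∇fᵢ(x̄)` and `grad f(x̄) = P_{T_x̄}((1/n)∑ᵢ ∇fᵢ(x̄))`. -/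
theorem stmt13 {d r n : ℕ} (L Lf : ℝ)
    (f : Fin n → Matrix (Fin d) (Fin r) ℝ → ℝ)
    (nabla : Fin n → Matrix (Fin d) (Fin r) ℝ → Matrix (Fin d) (Fin r) ℝ)
    (hdiff : ∀ i, Differentiable ℝ (f i))
    (hgrad : ∀ i x v, fderiv ℝ (f i) x v = Matrix.trace ((nabla i x).transpose * v))
    (hLip : ∀ i x y, ‖nabla i x - nabla i y‖ ≤ L * ‖x - y‖)
    (hbd : ∀ i, ∀ x ∈ Stiefel d r, ‖nabla i x‖ ≤ Lf)
    (x : Fin n → Matrix (Fin d) (Fin r) ℝ) (hx : ∀ i, x i ∈ Stiefel d r)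
    (xbar : Matrix (Fin d) (Fin r) ℝ) (hxbar : xbar ∈ Stiefel d r) :
    ‖Tproj xbar ((n : ℝ)⁻¹ • ∑ i, nabla i xbar)‖ ^ 2 ≤
      2 * ‖(n : ℝ)⁻¹ • ∑ i, Tproj (x i) (nabla i (x i))‖ ^ 2 +
        2 * (L + 2 * Lf) ^ 2 / n * ∑ i, ‖xbar - x i‖ ^ 2 := by
  simpa only [Fintype.card_fin] using
    stmt13_general (fun i x _ y _ => hLip i x y) hbd hx hxbar
end
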